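/- Bias bound for the one-step relative error estimator: for bounded measurable τ̂₁, τ̂₂ : 𝒳 → ℝ with |τ̂₁(x) − τ̂₂(x)| ≤ B for all x, | E[τ̂₁(X)² − τ̂₂(X)² − 2(τ̂₁(X) − τ̂₂(X))·Γ̃] − δ(τ̂₁, τ̂₂) | ≤ (2B/η′)·( E[|ẽ(X) − e(X)|·|μ̃₁(X) − μ₁(X)|] + E[|ẽ(X) − e(X)|·|μ̃₀(X) − μ₀(X)|] ). In particular, the bias is controlled by the products of the nuisance estimation errors only. -/

import Mathlib

open MeasureTheory ProbabilityTheory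

/-!
The `τ²` terms of the relative error cancel, so it is affine in `τ`: with `D = τ̂₁ - τ̂₂`, replacing
`τ` by a pseudo-outcome `Γ` changes it by `-2 E[D (Γ - τ)]`. As `D` is a function of `X`, only the
conditional bias `E[Γ | X] - τ` matters. For a single treatment arm with true and estimated
propensity `q`, `p` and true and estimated regression `ν`, `ν'`, the AIPW pseudo-outcome has
conditional bias `(p - q) (ν' - ν) / p`, and the control arm is the treated one with `W`, `e`, `ẽ`
replaced by `1 - W`, `1 - e`, `1 - ẽ`.
-/

section Integral

variable {Ω : Type*} {m mΩ : MeasurableSpace Ω} {P : Measure Ω}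

theorem integral_mul_condExp_of_aestronglyMeasurable_left (hm : m ≤ mΩ) [SigmaFinite (P.trim hm)]
    {f g : Ω → ℝ} (hf : AEStronglyMeasurable[m] f P) (hfg : Integrable (f * g) P)
    (hg : Integrable g P) :
    ∫ ω, f ω * (P[g | m]) ω ∂P = ∫ ω, f ω * g ω ∂P :=
  (integral_congr_ae (condExp_mul_of_aestronglyMeasurable_left hf hfg hg)).symm.trans
    (integral_condExp hm)

variable {S E : Type*} [mS : MeasurableSpace S] [NormedAddCommGroup E] [SecondCountableTopology E]
  [MeasurableSpace E] [OpensMeasurableSpace E] {X : Ω → S} {f : S → E}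

theorem memLp_comp_of_norm_le [IsFiniteMeasure P] (hX : Measurable X) (hf : Measurable f) {C : ℝ}
    (hC : ∀ x, ‖f x‖ ≤ C) (p : ENNReal) : MemLp (f ∘ X) p P :=
  .of_bound (hf.stronglyMeasurable.comp_measurable hX).aestronglyMeasurable C
    (.of_forall fun ω => hC (X ω))

theorem aestronglyMeasurable_comap_comp (hf : Measurable f) :
    AEStronglyMeasurable[mS.comap X] (f ∘ X) P :=
  (hf.stronglyMeasurable.comp_measurable (comap_measurable X)).aestronglyMeasurable

end Integral

section RelativeError

variable {Ω : Type*} {m mΩ : MeasurableSpace Ω}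

/-- The absolute error `φ(t) = E[(t - τ)²]` of an estimate `t` of the treatment effect `τ`, both
viewed as random variables. -/
noncomputable def absoluteError (P : Measure Ω) (τ t : Ω → ℝ) : ℝ :=
  ∫ ω, (t ω - τ ω) ^ 2 ∂P

/-- The relative error `δ(t₁, t₂) = φ(t₁) - φ(t₂)` of two estimates of `τ`. -/
noncomputable def relativeError (P : Measure Ω) (τ t₁ t₂ : Ω → ℝ) : ℝ :=
  absoluteError P τ t₁ - absoluteError P τ t₂

/-- The mean `E[t₁² - t₂² - 2 (t₁ - t₂) Γ]` of the one-step estimator of the relative error built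
from a pseudo-outcome `Γ`. -/
noncomputable def oneStepRelativeError (P : Measure Ω) (Γ t₁ t₂ : Ω → ℝ) : ℝ :=
  ∫ ω, (t₁ ω ^ 2 - t₂ ω ^ 2 - 2 * (t₁ ω - t₂ ω) * Γ ω) ∂P

variable {P : Measure Ω} {τ Γ t₁ t₂ : Ω → ℝ}

theorem relativeError_eq_oneStepRelativeError (hτ : MemLp τ 2 P) (ht₁ : MemLp t₁ 2 P)
    (ht₂ : MemLp t₂ 2 P) : relativeError P τ t₁ t₂ = oneStepRelativeError P τ t₁ t₂ := by
  have h₁ : Integrable (fun ω => (t₁ ω - τ ω) ^ 2) P := (ht₁.sub hτ).integrable_sq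
  have h₂ : Integrable (fun ω => (t₂ ω - τ ω) ^ 2) P := (ht₂.sub hτ).integrable_sq
  rw [relativeError, absoluteError, absoluteError, ← integral_sub h₁ h₂, oneStepRelativeError]
  congr with ω
  ring

theorem oneStepRelativeError_eq_sub (ht₁ : MemLp t₁ 2 P) (ht₂ : MemLp t₂ 2 P)
    (htΓ : Integrable ((t₁ - t₂) * Γ) P) :
    oneStepRelativeError P Γ t₁ t₂ =
      ∫ ω, (t₁ ω ^ 2 - t₂ ω ^ 2) ∂P - 2 * ∫ ω, (t₁ ω - t₂ ω) * Γ ω ∂P := by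
  have hsq : Integrable (fun ω => t₁ ω ^ 2 - t₂ ω ^ 2) P := ht₁.integrable_sq.sub ht₂.integrable_sq
  have hmul : Integrable (fun ω => 2 * ((t₁ ω - t₂ ω) * Γ ω)) P := htΓ.const_mul 2
  rw [oneStepRelativeError, ← integral_const_mul, ← integral_sub hsq hmul]
  congr with ω
  ring

theorem oneStepRelativeError_condExp (hm : m ≤ mΩ) [SigmaFinite (P.trim hm)]
    (ht : AEStronglyMeasurable[m] (t₁ - t₂) P) (ht₁ : MemLp t₁ 2 P) (ht₂ : MemLp t₂ 2 P) {B : ℝ}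
    (hB : ∀ᵐ ω ∂P, |t₁ ω - t₂ ω| ≤ B) (hΓ : Integrable Γ P) :
    oneStepRelativeError P (P[Γ | m]) t₁ t₂ = oneStepRelativeError P Γ t₁ t₂ := by
  have htΓ : Integrable ((t₁ - t₂) * Γ) P := hΓ.bdd_mul (ht.mono hm) hB
  have htΓm : Integrable ((t₁ - t₂) * P[Γ | m]) P := integrable_condExp.bdd_mul (ht.mono hm) hB
  rw [oneStepRelativeError_eq_sub ht₁ ht₂ htΓ, oneStepRelativeError_eq_sub ht₁ ht₂ htΓm]
  congr 2
  exact integral_mul_condExp_of_aestronglyMeasurable_left hm ht htΓ hΓ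

theorem abs_oneStepRelativeError_sub_le {Γ' R : Ω → ℝ} (ht₁ : MemLp t₁ 2 P) (ht₂ : MemLp t₂ 2 P)
    {B : ℝ} (hB : ∀ᵐ ω ∂P, |t₁ ω - t₂ ω| ≤ B) (hΓ : Integrable Γ P) (hΓ' : Integrable Γ' P)
    (hR : Integrable R P) (hΓR : ∀ᵐ ω ∂P, |Γ ω - Γ' ω| ≤ R ω) :
    |oneStepRelativeError P Γ t₁ t₂ - oneStepRelativeError P Γ' t₁ t₂| ≤ 2 * B * ∫ ω, R ω ∂P := by
  have ht : AEStronglyMeasurable (t₁ - t₂) P := (ht₁.sub ht₂).aestronglyMeasurable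
  have htΓ : Integrable (fun ω => (t₁ ω - t₂ ω) * Γ ω) P := hΓ.bdd_mul ht hB
  have htΓ' : Integrable (fun ω => (t₁ ω - t₂ ω) * Γ' ω) P := hΓ'.bdd_mul ht hB
  have hdiff : oneStepRelativeError P Γ t₁ t₂ - oneStepRelativeError P Γ' t₁ t₂ =
      -2 * ∫ ω, (t₁ ω - t₂ ω) * (Γ ω - Γ' ω) ∂P := by
    simp only [mul_sub, oneStepRelativeError_eq_sub ht₁ ht₂ htΓ,
      oneStepRelativeError_eq_sub ht₁ ht₂ htΓ', integral_sub htΓ htΓ']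
    ring
  have hbound : |∫ ω, (t₁ ω - t₂ ω) * (Γ ω - Γ' ω) ∂P| ≤ ∫ ω, B * R ω ∂P := by
    rw [← Real.norm_eq_abs]
    refine norm_integral_le_of_norm_le (hR.const_mul B) ?_
    filter_upwards [hB, hΓR] with ω hBω hRω
    rw [norm_mul]
    exact mul_le_mul hBω hRω (abs_nonneg _) ((abs_nonneg _).trans hBω)
  rw [hdiff, abs_mul, abs_neg, abs_two, mul_assoc, ← integral_const_mul]
  gcongr

end RelativeError

section AIPW

variable {Ω : Type*} {m mΩ : MeasurableSpace Ω} {P : Measure Ω}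

/-- The AIPW pseudo-outcome of a single treatment arm with arm indicator `V`, outcome `Y`,
estimated arm probability `p` and estimated outcome regression `ν`. The control arm is encoded by
`V = 1 - W`. -/
noncomputable def aipwArm (V Y p ν : Ω → ℝ) : Ω → ℝ :=
  fun ω => V ω * (Y ω - ν ω) / p ω + ν ω

/-- The AIPW pseudo-outcome `Γ̃` of the treatment effect, with estimated propensity score `p` and
estimated outcome regressions `ν₀`, `ν₁`. -/
noncomputable def aipwPseudoOutcome (W Y p ν₀ ν₁ : Ω → ℝ) : Ω → ℝ :=
  fun ω => W ω * (Y ω - ν₁ ω) / p ω + ν₁ ω - (1 - W ω) * (Y ω - ν₀ ω) / (1 - p ω) - ν₀ ω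

theorem aipwPseudoOutcome_eq_sub (W Y p ν₀ ν₁ : Ω → ℝ) :
    aipwPseudoOutcome W Y p ν₀ ν₁ = aipwArm W Y p ν₁ - aipwArm (1 - W) Y (1 - p) ν₀ :=
  funext fun _ => sub_sub _ _ _

theorem aipwArm_eq_inv_mul_add (V Y p ν : Ω → ℝ) :
    aipwArm V Y p ν = p⁻¹ * (V * Y - ν * V) + ν := by
  ext ω
  simp only [aipwArm, Pi.add_apply, Pi.mul_apply, Pi.sub_apply, Pi.inv_apply]
  ring

theorem integrable_inv_mul_of_le {p f : Ω → ℝ} (hp : AEStronglyMeasurable p P) {η : ℝ}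
    (hη : 0 < η) (hηp : ∀ᵐ ω ∂P, η ≤ p ω) (hf : Integrable f P) : Integrable (p⁻¹ * f) P := by
  refine hf.bdd_mul (c := η⁻¹) hp.inv₀ ?_
  filter_upwards [hηp] with ω hω
  rw [Pi.inv_apply, norm_inv, Real.norm_of_nonneg (hη.le.trans hω)]
  exact inv_anti₀ hη hω

section Arm

variable {V Y p q ν ν' : Ω → ℝ} {η : ℝ}

theorem integrable_aipwArm [IsFiniteMeasure P] (hV : MemLp V 2 P) (hVY : Integrable (V * Y) P)
    (hp : AEStronglyMeasurable p P) (hη : 0 < η) (hηp : ∀ᵐ ω ∂P, η ≤ p ω) (hν' : MemLp ν' 2 P) :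
    Integrable (aipwArm V Y p ν') P := by
  rw [aipwArm_eq_inv_mul_add]
  exact (integrable_inv_mul_of_le hp hη hηp (hVY.sub (hν'.integrable_mul hV))).add
    (hν'.integrable one_le_two)

theorem condExp_aipwArm [IsFiniteMeasure P] (hm : m ≤ mΩ) (hV : MemLp V 2 P)
    (hVY : Integrable (V * Y) P) (hp : AEStronglyMeasurable[m] p P) (hη : 0 < η)
    (hηp : ∀ᵐ ω ∂P, η ≤ p ω) (hν'm : AEStronglyMeasurable[m] ν' P) (hν' : MemLp ν' 2 P) :
    P[aipwArm V Y p ν' | m] =ᵐ[P] p⁻¹ * (P[V * Y | m] - ν' * P[V | m]) + ν' := by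
  have hν'V : Integrable (ν' * V) P := hν'.integrable_mul hV
  have hν'_int : Integrable ν' P := hν'.integrable one_le_two
  have hres : Integrable (p⁻¹ * (V * Y - ν' * V)) P :=
    integrable_inv_mul_of_le (hp.mono hm) hη hηp (hVY.sub hν'V)
  rw [aipwArm_eq_inv_mul_add]
  filter_upwards [condExp_add hres hν'_int m, condExp_of_aestronglyMeasurable' hm hν'm hν'_int,
    condExp_mul_of_aestronglyMeasurable_left hp.inv₀ hres (hVY.sub hν'V),
    condExp_sub hVY hν'V m,
    condExp_mul_of_aestronglyMeasurable_left hν'm hν'V (hV.integrable one_le_two)]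
    with ω hadd hν'ω hpull hsub hν'Vω
  simp only [Pi.add_apply, Pi.mul_apply, Pi.sub_apply] at hadd hpull hsub hν'Vω ⊢
  rw [hadd, hpull, hsub, hν'Vω, hν'ω]

theorem condExp_aipwArm_sub [IsFiniteMeasure P] (hm : m ≤ mΩ) (hV : MemLp V 2 P)
    (hVY : Integrable (V * Y) P) (hp : AEStronglyMeasurable[m] p P) (hη : 0 < η)
    (hηp : ∀ᵐ ω ∂P, η ≤ p ω) (hν'm : AEStronglyMeasurable[m] ν' P) (hν' : MemLp ν' 2 P)
    (hq : P[V | m] =ᵐ[P] q) (hqν : P[V * Y | m] =ᵐ[P] q * ν) :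
    P[aipwArm V Y p ν' | m] - ν =ᵐ[P] (p - q) * (ν' - ν) / p := by
  filter_upwards [condExp_aipwArm hm hV hVY hp hη hηp hν'm hν', hηp, hq, hqν]
    with ω harm hηpω hqω hqνω
  have hpω : p ω ≠ 0 := (hη.trans_le hηpω).ne'
  simp only [Pi.add_apply, Pi.mul_apply, Pi.sub_apply, Pi.inv_apply, Pi.div_apply] at harm hqνω ⊢
  rw [harm, hqω, hqνω]
  field_simp
  ring

theorem abs_condExp_aipwArm_sub_le [IsFiniteMeasure P] (hm : m ≤ mΩ) (hV : MemLp V 2 P)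
    (hVY : Integrable (V * Y) P) (hp : AEStronglyMeasurable[m] p P) (hη : 0 < η)
    (hηp : ∀ᵐ ω ∂P, η ≤ p ω) (hν'm : AEStronglyMeasurable[m] ν' P) (hν' : MemLp ν' 2 P)
    (hq : P[V | m] =ᵐ[P] q) (hqν : P[V * Y | m] =ᵐ[P] q * ν) :
    ∀ᵐ ω ∂P, |(P[aipwArm V Y p ν' | m]) ω - ν ω| ≤ |p ω - q ω| * |ν' ω - ν ω| / η := by
  filter_upwards [condExp_aipwArm_sub hm hV hVY hp hη hηp hν'm hν' hq hqν, hηp]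
    with ω hbias hηpω
  calc |(P[aipwArm V Y p ν' | m]) ω - ν ω|
      = |(p ω - q ω) * (ν' ω - ν ω) / p ω| := congrArg abs hbias
    _ = |p ω - q ω| * |ν' ω - ν ω| / p ω := by
        rw [abs_div, abs_mul, abs_of_pos (hη.trans_le hηpω)]
    _ ≤ |p ω - q ω| * |ν' ω - ν ω| / η := by gcongr

end Arm

variable [IsFiniteMeasure P] {W Y e et μ₀ μ₁ μt₀ μt₁ : Ω → ℝ} {η : ℝ}

theorem condExp_one_sub (hm : m ≤ mΩ) (hW : Integrable W P) (he : P[W | m] =ᵐ[P] e) :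
    P[1 - W | m] =ᵐ[P] 1 - e := by
  filter_upwards [condExp_sub (integrable_const (1 : ℝ)) hW m, he] with ω hsub heω
  rw [condExp_const hm] at hsub
  exact hsub.trans (congrArg (1 - ·) heω)

theorem integrable_aipwPseudoOutcome (hW : MemLp W 2 P) (hY : MemLp Y 2 P)
    (het : AEStronglyMeasurable et P) (hη : 0 < η)
    (hetη : ∀ᵐ ω ∂P, η ≤ et ω ∧ et ω ≤ 1 - η)
    (hμt₀ : MemLp μt₀ 2 P) (hμt₁ : MemLp μt₁ 2 P) :
    Integrable (aipwPseudoOutcome W Y et μt₀ μt₁) P := by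
  have hW' : MemLp (1 - W) 2 P := (memLp_const 1).sub hW
  rw [aipwPseudoOutcome_eq_sub]
  exact (integrable_aipwArm hW (hW.integrable_mul hY) het hη (hetη.mono fun _ h => h.1) hμt₁).sub
    (integrable_aipwArm hW' (hW'.integrable_mul hY) (aestronglyMeasurable_const.sub het) hη
      (hetη.mono fun _ h => le_sub_comm.1 h.2) hμt₀)

theorem abs_condExp_aipwPseudoOutcome_sub_le (hm : m ≤ mΩ) (hW : MemLp W 2 P) (hY : MemLp Y 2 P)
    (hce : P[W | m] =ᵐ[P] e) (hc1 : P[W * Y | m] =ᵐ[P] e * μ₁)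
    (hc0 : P[(1 - W) * Y | m] =ᵐ[P] (1 - e) * μ₀)
    (het : AEStronglyMeasurable[m] et P) (hη : 0 < η)
    (hetη : ∀ᵐ ω ∂P, η ≤ et ω ∧ et ω ≤ 1 - η)
    (hμt₀m : AEStronglyMeasurable[m] μt₀ P) (hμt₁m : AEStronglyMeasurable[m] μt₁ P)
    (hμt₀ : MemLp μt₀ 2 P) (hμt₁ : MemLp μt₁ 2 P) :
    ∀ᵐ ω ∂P, |(P[aipwPseudoOutcome W Y et μt₀ μt₁ | m]) ω - (μ₁ ω - μ₀ ω)| ≤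
      (|et ω - e ω| * |μt₁ ω - μ₁ ω| + |et ω - e ω| * |μt₀ ω - μ₀ ω|) / η := by
  have hW' : MemLp (1 - W) 2 P := (memLp_const 1).sub hW
  have het' : AEStronglyMeasurable[m] (1 - et) P := aestronglyMeasurable_const.sub het
  have hη₁ : ∀ᵐ ω ∂P, η ≤ et ω := hetη.mono fun _ h => h.1
  have hη₀ : ∀ᵐ ω ∂P, η ≤ (1 - et) ω := hetη.mono fun _ h => le_sub_comm.1 h.2
  have hWY := hW.integrable_mul hY
  have hWY' := hW'.integrable_mul hY
  have hce' : P[1 - W | m] =ᵐ[P] 1 - e := condExp_one_sub hm (hW.integrable one_le_two) hce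
  rw [aipwPseudoOutcome_eq_sub]
  filter_upwards [
    condExp_sub (integrable_aipwArm hW hWY (het.mono hm) hη hη₁ hμt₁)
      (integrable_aipwArm hW' hWY' (het'.mono hm) hη hη₀ hμt₀) m,
    abs_condExp_aipwArm_sub_le hm hW hWY het hη hη₁ hμt₁m hμt₁ hce hc1,
    abs_condExp_aipwArm_sub_le hm hW' hWY' het' hη hη₀ hμt₀m hμt₀ hce' hc0]
    with ω hsub h₁ h₀
  have hprop : |(1 - et) ω - (1 - e) ω| = |et ω - e ω| := by
    simp only [Pi.sub_apply, sub_sub_sub_cancel_left, abs_sub_comm]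
  rw [hprop] at h₀
  rw [hsub, Pi.sub_apply, sub_sub_sub_comm, add_div]
  exact (abs_sub _ _).trans (add_le_add h₁ h₀)

end AIPW

theorem relative_error_bias_bound_general
    {Ω : Type*} {m mΩ : MeasurableSpace Ω} (hm : m ≤ mΩ) {P : Measure Ω} [IsFiniteMeasure P]
    {W Y e μ₀ μ₁ μt₀ μt₁ et t₁ t₂ : Ω → ℝ} (hW : MemLp W 2 P) (hY : MemLp Y 2 P)
    (hμ₀ : MemLp μ₀ 2 P) (hμ₁ : MemLp μ₁ 2 P)
    (hce : P[W | m] =ᵐ[P] e) (hc1 : P[W * Y | m] =ᵐ[P] e * μ₁)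
    (hc0 : P[(1 - W) * Y | m] =ᵐ[P] (1 - e) * μ₀)
    (hμt₀m : AEStronglyMeasurable[m] μt₀ P) (hμt₁m : AEStronglyMeasurable[m] μt₁ P)
    (hμt₀ : MemLp μt₀ 2 P) (hμt₁ : MemLp μt₁ 2 P)
    (het : AEStronglyMeasurable[m] et P) {η : ℝ} (hη : 0 < η)
    (hetη : ∀ᵐ ω ∂P, η ≤ et ω ∧ et ω ≤ 1 - η)
    (ht : AEStronglyMeasurable[m] (t₁ - t₂) P) (ht₁ : MemLp t₁ 2 P) (ht₂ : MemLp t₂ 2 P)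
    {B : ℝ} (hB : ∀ᵐ ω ∂P, |t₁ ω - t₂ ω| ≤ B) :
    |oneStepRelativeError P (aipwPseudoOutcome W Y et μt₀ μt₁) t₁ t₂
        - relativeError P (μ₁ - μ₀) t₁ t₂| ≤
      2 * B / η * ((∫ ω, |et ω - e ω| * |μt₁ ω - μ₁ ω| ∂P)
        + ∫ ω, |et ω - e ω| * |μt₀ ω - μ₀ ω| ∂P) := by
  have he : MemLp e 2 P := (hW.condExp one_le_two).ae_eq hce
  have het_memLp : MemLp et 2 P := .of_bound (het.mono hm) 1 <| hetη.mono fun _ h =>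
    abs_le.2 ⟨by linarith, by linarith⟩
  have hτ : MemLp (μ₁ - μ₀) 2 P := hμ₁.sub hμ₀
  have hR₁ : Integrable (fun ω => |et ω - e ω| * |μt₁ ω - μ₁ ω|) P :=
    (het_memLp.sub he).abs.integrable_mul (hμt₁.sub hμ₁).abs
  have hR₀ : Integrable (fun ω => |et ω - e ω| * |μt₀ ω - μ₀ ω|) P :=
    (het_memLp.sub he).abs.integrable_mul (hμt₀.sub hμ₀).abs
  rw [← oneStepRelativeError_condExp hm ht ht₁ ht₂ hB
      (integrable_aipwPseudoOutcome hW hY (het.mono hm) hη hetη hμt₀ hμt₁),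
    relativeError_eq_oneStepRelativeError hτ ht₁ ht₂]
  refine (abs_oneStepRelativeError_sub_le ht₁ ht₂ hB integrable_condExp (hτ.integrable one_le_two)
    ((hR₁.add hR₀).div_const η) (abs_condExp_aipwPseudoOutcome_sub_le hm hW hY hce hc1 hc0 het hη
      hetη hμt₀m hμt₁m hμt₀ hμt₁)).trans_eq ?_
  simp only [Pi.add_apply]
  rw [integral_div, integral_add hR₁ hR₀]
  ring

/-- Bias bound for the one-step relative error estimator: for `|τ̂₁ − τ̂₂| ≤ B`,
`|E[τ̂₁(X)² − τ̂₂(X)² − 2(τ̂₁(X) − τ̂₂(X))·Γ̃] − δ(τ̂₁, τ̂₂)|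
  ≤ (2B/η′)·(E[|ẽ(X) − e(X)|·|μ̃₁(X) − μ₁(X)|] + E[|ẽ(X) − e(X)|·|μ̃₀(X) − μ₀(X)|])`. -/
theorem relative_error_bias_bound
    {Ω 𝒳 : Type*} [MeasurableSpace Ω] [m𝒳 : MeasurableSpace 𝒳]
    (P : Measure Ω) [IsProbabilityMeasure P]
    (X : Ω → 𝒳) (W Y : Ω → ℝ)
    (hX : Measurable X) (hW : Measurable W) (hY : Measurable Y)
    (hW01 : ∀ᵐ ω ∂P, W ω = 0 ∨ W ω = 1)
    (M : ℝ) (hM : 0 < M) (hYb : ∀ᵐ ω ∂P, |Y ω| ≤ M)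
    (e μ₀ μ₁ : 𝒳 → ℝ)
    (he : Measurable e) (hμ₀ : Measurable μ₀) (hμ₁ : Measurable μ₁)
    (C₀ C₁ : ℝ) (hμ₀b : ∀ x, |μ₀ x| ≤ C₀) (hμ₁b : ∀ x, |μ₁ x| ≤ C₁)
    (η : ℝ) (hη₀ : 0 < η) (hη₁ : η < 1/2)
    (heb : ∀ x, η ≤ e x ∧ e x ≤ 1 - η)
    (hce : P[W | m𝒳.comap X] =ᵐ[P] fun ω => e (X ω))
    (hc1 : P[fun ω => W ω * Y ω | m𝒳.comap X] =ᵐ[P] fun ω => e (X ω) * μ₁ (X ω))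
    (hc0 : P[fun ω => (1 - W ω) * Y ω | m𝒳.comap X]
        =ᵐ[P] fun ω => (1 - e (X ω)) * μ₀ (X ω))
    (μt₀ μt₁ et : 𝒳 → ℝ)
    (hμt₀ : Measurable μt₀) (hμt₁ : Measurable μt₁) (het : Measurable et)
    (Ct₀ Ct₁ : ℝ) (hμt₀b : ∀ x, |μt₀ x| ≤ Ct₀) (hμt₁b : ∀ x, |μt₁ x| ≤ Ct₁)
    (η' : ℝ) (hη'₀ : 0 < η') (hη'₁ : η' < 1/2)
    (hetb : ∀ x, η' ≤ et x ∧ et x ≤ 1 - η') :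
    ∀ (τhat₁ τhat₂ : 𝒳 → ℝ) (B₁ B₂ B : ℝ), Measurable τhat₁ → Measurable τhat₂ →
      (∀ x, |τhat₁ x| ≤ B₁) → (∀ x, |τhat₂ x| ≤ B₂) →
      (∀ x, |τhat₁ x - τhat₂ x| ≤ B) →
      |(∫ ω, (τhat₁ (X ω) ^ 2 - τhat₂ (X ω) ^ 2
          - 2 * (τhat₁ (X ω) - τhat₂ (X ω))
            * (W ω * (Y ω - μt₁ (X ω)) / et (X ω) + μt₁ (X ω)
              - (1 - W ω) * (Y ω - μt₀ (X ω)) / (1 - et (X ω)) - μt₀ (X ω))) ∂P)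
        - ((∫ ω, (τhat₁ (X ω) - (μ₁ (X ω) - μ₀ (X ω))) ^ 2 ∂P)
            - ∫ ω, (τhat₂ (X ω) - (μ₁ (X ω) - μ₀ (X ω))) ^ 2 ∂P)|
        ≤ (2 * B / η') * ((∫ ω, |et (X ω) - e (X ω)| * |μt₁ (X ω) - μ₁ (X ω)| ∂P)
            + ∫ ω, |et (X ω) - e (X ω)| * |μt₀ (X ω) - μ₀ (X ω)| ∂P) := by
  intro τhat₁ τhat₂ B₁ B₂ B hτ₁ hτ₂ hB₁ hB₂ hB
  have hWp : MemLp W 2 P := .of_bound hW.aestronglyMeasurable 1 <| hW01.mono fun ω h => by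
    rcases h with h | h <;> simp [h]
  exact relative_error_bias_bound_general hX.comap_le hWp (.of_bound hY.aestronglyMeasurable M hYb)
    (memLp_comp_of_norm_le hX hμ₀ hμ₀b 2) (memLp_comp_of_norm_le hX hμ₁ hμ₁b 2) hce hc1 hc0
    (aestronglyMeasurable_comap_comp hμt₀) (aestronglyMeasurable_comap_comp hμt₁)
    (memLp_comp_of_norm_le hX hμt₀ hμt₀b 2) (memLp_comp_of_norm_le hX hμt₁ hμt₁b 2)
    (aestronglyMeasurable_comap_comp het) hη'₀ (.of_forall fun ω => hetb (X ω))
    (aestronglyMeasurable_comap_comp (hτ₁.sub hτ₂)) (memLp_comp_of_norm_le hX hτ₁ hB₁ 2)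
    (memLp_comp_of_norm_le hX hτ₂ hB₂ 2) (.of_forall fun ω => hB (X ω))
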